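/- For all n > 24, 0 < ε < 1/3, and δ > 0, if m = ε^{-2} n^{1+δ}, then P{ |∑_{i=1}^n k_i(x)(k_i(x)−1)/(m(m−1)) · 1/‖p‖² − 1| ≤ 22 ε } ≥ 1 − (10/9) e^{−n^{δ}}, where x ∈ U^m is drawn from the product measure. -/

import Mathlib

/-- Number of keys of the sequence `x` (counted with multiplicity) hashed into slot `i`. -/
def kcount {U : Type*} [Fintype U] {n m : ℕ} (h : U → Fin n) (x : Fin m → U) (i : Fin n) : ℕ :=
  (Finset.univ.filter (fun j => h (x j) = i)).card

/-- Probability of a set `S` of key sequences, under the product measure induced by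
the probability mass function `q` on the key space `U`. -/
noncomputable def Pr {U : Type*} [Fintype U] {m : ℕ} (q : U → ℝ) (S : Set (Fin m → U)) : ℝ :=
  ∑ x : Fin m → U, S.indicator (fun y => ∏ j, q (y j)) x

/-- The empirical collision probability `∑ i, k_i(x)(k_i(x) − 1) / (m(m−1))`
of a sequence `x` of `m` keys. -/
noncomputable def collEst {U : Type*} [Fintype U] {n m : ℕ} (h : U → Fin n)
    (x : Fin m → U) : ℝ :=
  ∑ i : Fin n, (kcount h x i : ℝ) * ((kcount h x i : ℝ) - 1) / ((m : ℝ) * ((m : ℝ) - 1))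

/-! The vector `k(x) = (k₁(x), …, kₙ(x))` of slot counts is a sum of `m` independent unit vectors
of Euclidean space with mean `p`. Orthogonality of the centered summands gives `E ‖k − m p‖ ≤ √m`,
and changing one key moves `k` by at most `2`, so by McDiarmid's inequality
`‖k − m p‖ ≤ √m + √(2 s m)` outside an event of probability at most `e⁻ˢ`. Since
`∑ kᵢ(kᵢ − 1) = ‖k‖² − m` and `‖m p‖² = m² ‖p‖² ≥ m² / n`, the estimator then has relative error
`O(√(n s / m))`, which is `O(ε)` for `s = n ^ δ`. -/

open MeasureTheory ProbabilityTheory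
open scoped NNReal
open Real (exp)

section BoundedDifferences

variable {α β : Type*} {mα : MeasurableSpace α} {mβ : MeasurableSpace β}

theorem hasSubgaussianMGF_sub_integral_of_abs_sub_le {μ : Measure α} [IsProbabilityMeasure μ]
    {X : α → ℝ} (hX : AEMeasurable X μ) {c : ℝ≥0} (hc : ∀ a b, |X a - X b| ≤ c) :
    HasSubgaussianMGF (fun a ↦ X a - ∫ b, X b ∂μ) ((c / 2) ^ 2) μ := by
  have : Nonempty α := nonempty_of_isProbabilityMeasure μ
  have hbdd : BddBelow (Set.range X) :=
    ⟨X (Classical.arbitrary α) - c,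
      Set.forall_mem_range.2 fun a ↦ sub_le_comm.1 (le_of_abs_le (hc _ a))⟩
  have hmem (a : α) : X a ∈ Set.Icc (⨅ b, X b) ((⨅ b, X b) + c) :=
    ⟨ciInf_le hbdd a, sub_le_iff_le_add.1 <|
      le_ciInf fun b ↦ sub_le_comm.1 (le_of_abs_le (hc a b))⟩
  simpa using hasSubgaussianMGF_of_mem_Icc hX (ae_of_all μ hmem)

theorem hasSubgaussianMGF_add_prod {μ : Measure α} {ν : Measure β} [SFinite μ] [SFinite ν]
    {X : α → ℝ} {Y : α × β → ℝ} {c d : ℝ≥0} (hX : HasSubgaussianMGF X c μ)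
    (hYm : AEStronglyMeasurable Y (μ.prod ν))
    (hY : ∀ a, HasSubgaussianMGF (fun b ↦ Y (a, b)) d ν) :
    HasSubgaussianMGF (fun z ↦ X z.1 + Y z) (c + d) (μ.prod ν) := by
  have hfiber (t : ℝ) (a : α) : ∫ b, exp (t * (X a + Y (a, b))) ∂ν =
      exp (t * X a) * mgf (fun b ↦ Y (a, b)) ν t := by
    simp only [mgf, mul_add, Real.exp_add, integral_const_mul]
  have hfiber_le (t : ℝ) (a : α) : ∫ b, exp (t * (X a + Y (a, b))) ∂ν ≤
      exp (t * X a) * exp (d * t ^ 2 / 2) := by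
    rw [hfiber]
    gcongr
    exact (hY a).mgf_le t
  have hmeas (t : ℝ) :
      AEStronglyMeasurable (fun z : α × β ↦ exp (t * (X z.1 + Y z))) (μ.prod ν) :=
    Real.continuous_exp.comp_aestronglyMeasurable
      ((hX.aestronglyMeasurable.comp_fst.add hYm).const_mul t)
  have hint (t : ℝ) : Integrable (fun z : α × β ↦ exp (t * (X z.1 + Y z))) (μ.prod ν) := by
    refine (integrable_prod_iff (hmeas t)).2 ⟨ae_of_all μ fun a ↦ ?_, ?_⟩
    · simp only [mul_add, Real.exp_add]
      exact ((hY a).integrable_exp_mul t).const_mul _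
    · refine ((hX.integrable_exp_mul t).mul_const (exp (d * t ^ 2 / 2))).mono'
        (hmeas t).norm.integral_prod_right' (ae_of_all μ fun a ↦ ?_)
      simp only [Real.norm_eq_abs, Real.abs_exp]
      rw [abs_of_nonneg (integral_nonneg fun b ↦ (Real.exp_pos _).le)]
      exact hfiber_le t a
  refine ⟨hint, fun t ↦ ?_⟩
  calc mgf (fun z ↦ X z.1 + Y z) (μ.prod ν) t
      = ∫ a, ∫ b, exp (t * (X a + Y (a, b))) ∂ν ∂μ := integral_prod _ (hint t)
    _ ≤ ∫ a, exp (t * X a) * exp (d * t ^ 2 / 2) ∂μ :=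
        integral_mono (hint t).integral_prod_left
          ((hX.integrable_exp_mul t).mul_const _) (hfiber_le t)
    _ = mgf X μ t * exp (d * t ^ 2 / 2) := integral_mul_const _ _
    _ ≤ exp (c * t ^ 2 / 2) * exp (d * t ^ 2 / 2) := by gcongr; exact hX.mgf_le t
    _ = exp (↑(c + d) * t ^ 2 / 2) := by rw [← Real.exp_add]; push_cast; ring_nf

theorem hasSubgaussianMGF_sub_integral_prod {μ : Measure α} {ν : Measure β}
    [IsProbabilityMeasure μ] [IsProbabilityMeasure ν] {f : α × β → ℝ} (hf : Measurable f)
    {c d : ℝ≥0} (hfst : ∀ a a' b, |f (a, b) - f (a', b)| ≤ c)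
    (hsnd : ∀ a, HasSubgaussianMGF (fun b ↦ f (a, b) - ∫ b', f (a, b') ∂ν) d ν) :
    HasSubgaussianMGF (fun z ↦ f z - ∫ z', f z' ∂μ.prod ν) ((c / 2) ^ 2 + d) (μ.prod ν) := by
  have hint (a : α) : Integrable (fun b ↦ f (a, b)) ν := by
    simpa only [Pi.add_def, sub_add_cancel] using
      (hsnd a).integrable.add (integrable_const (∫ b, f (a, b) ∂ν))
  have hmean : StronglyMeasurable fun a ↦ ∫ b, f (a, b) ∂ν :=
    hf.stronglyMeasurable.integral_prod_right'
  have hosc (a a' : α) : |∫ b, f (a, b) ∂ν - ∫ b, f (a', b) ∂ν| ≤ c := by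
    rw [← integral_sub (hint a) (hint a')]
    simpa using norm_integral_le_of_norm_le_const (f := fun b ↦ f (a, b) - f (a', b)) (C := c)
      (ae_of_all ν (hfst a a'))
  have hsub : HasSubgaussianMGF (fun z : α × β ↦ f z - ∫ a, ∫ b, f (a, b) ∂ν ∂μ)
      ((c / 2) ^ 2 + d) (μ.prod ν) := by
    simpa using hasSubgaussianMGF_add_prod
      (hasSubgaussianMGF_sub_integral_of_abs_sub_le hmean.measurable.aemeasurable hosc)
      (hf.sub (hmean.measurable.comp measurable_fst)).aestronglyMeasurable hsnd
  have hf_int : Integrable f (μ.prod ν) := by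
    simpa only [Pi.add_def, sub_add_cancel] using
      hsub.integrable.add (integrable_const (∫ a, ∫ b, f (a, b) ∂ν ∂μ))
  rwa [integral_prod f hf_int]

theorem measurePreserving_head_tail {m : ℕ} {Ω : Fin (m + 1) → Type*}
    [∀ i, MeasurableSpace (Ω i)] (μ : ∀ i, Measure (Ω i)) [∀ i, SigmaFinite (μ i)] :
    MeasurePreserving (fun x : ∀ i, Ω i ↦ (x 0, Fin.tail x)) (Measure.pi μ)
      ((μ 0).prod (Measure.pi fun j ↦ μ j.succ)) :=
  measurePreserving_piFinSuccAbove μ 0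

theorem hasSubgaussianMGF_sub_integral_pi_of_abs_update_sub_le {m : ℕ}
    {Ω : Fin m → Type*} {mΩ : ∀ i, MeasurableSpace (Ω i)} {μ : ∀ i, Measure (Ω i)}
    [∀ i, IsProbabilityMeasure (μ i)]
    {f : (∀ i, Ω i) → ℝ} (hf : Measurable f) {c : Fin m → ℝ≥0}
    (hc : ∀ x i u, |f (Function.update x i u) - f x| ≤ c i) :
    HasSubgaussianMGF (fun x ↦ f x - ∫ y, f y ∂Measure.pi μ) (∑ i, (c i / 2) ^ 2)
      (Measure.pi μ) := by
  induction m with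
  | zero =>
    refine HasSubgaussianMGF.fun_zero.congr (ae_of_all _ fun x ↦ ?_)
    simp [Subsingleton.elim _ x]
  | succ m ih =>
    have hφ := measurePreserving_head_tail μ
    set g : Ω 0 × (∀ j : Fin m, Ω j.succ) → ℝ := fun z ↦ f (Fin.cons z.1 z.2) with hg
    have hfg (x : ∀ i, Ω i) : g (x 0, Fin.tail x) = f x := congrArg f (Fin.cons_self_tail x)
    have hcons : Measurable
        fun z : Ω 0 × (∀ j : Fin m, Ω j.succ) ↦ (Fin.cons z.1 z.2 : ∀ i, Ω i) :=
      measurable_pi_lambda _ <| Fin.cases measurable_fst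
        fun j ↦ (measurable_pi_apply j).comp measurable_snd
    have hgm : Measurable g := hf.comp hcons
    have hfst (a a' : Ω 0) (y : ∀ j : Fin m, Ω j.succ) : |g (a, y) - g (a', y)| ≤ c 0 := by
      simpa [hg] using hc (Fin.cons a' y) 0 a
    have hsnd (a : Ω 0) := ih (μ := fun j ↦ μ j.succ) (f := fun y ↦ g (a, y))
      (c := fun j ↦ c j.succ) (hgm.comp measurable_prodMk_left)
      (fun y j u ↦ by simpa [hg, Fin.cons_update] using hc (Fin.cons a y) j.succ u)
    have hprod := hasSubgaussianMGF_sub_integral_prod (μ := μ 0) hgm hfst hsnd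
    rw [← hφ.map_eq] at hprod
    have := hprod.of_map hφ.aemeasurable
    rw [integral_map hφ.aemeasurable hgm.aestronglyMeasurable] at this
    simpa only [Function.comp_def, hfg, Fin.sum_univ_succ] using this

theorem hasSubgaussianMGF_norm_sum_sub_integral {E : Type*} [NormedAddCommGroup E] {m : ℕ}
    {Ω : Fin m → Type*} {mΩ : ∀ j, MeasurableSpace (Ω j)} {μ : ∀ j, Measure (Ω j)}
    [∀ j, IsProbabilityMeasure (μ j)] {Y : ∀ j, Ω j → E} (hY : ∀ j, StronglyMeasurable (Y j))
    {c : Fin m → ℝ≥0} (hc : ∀ j u v, ‖Y j u - Y j v‖ ≤ c j) :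
    HasSubgaussianMGF (fun ω ↦ ‖∑ j, Y j (ω j)‖ - ∫ ω', ‖∑ j, Y j (ω' j)‖ ∂Measure.pi μ)
      (∑ j, (c j / 2) ^ 2) (Measure.pi μ) := by
  refine hasSubgaussianMGF_sub_integral_pi_of_abs_update_sub_le
    (f := fun ω ↦ ‖∑ j, Y j (ω j)‖) ?_ fun ω i u ↦ ?_
  · exact (Finset.stronglyMeasurable_fun_sum _ fun j _ ↦
      (hY j).comp_measurable (measurable_pi_apply j)).norm.measurable
  · have hsum : ∑ j, Y j (Function.update ω i u j) - ∑ j, Y j (ω j) = Y i u - Y i (ω i) := by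
      rw [← Finset.sum_sub_distrib, Fintype.sum_eq_single i fun j hj ↦ by simp [hj],
        Function.update_self]
    exact (abs_norm_sub_norm_le _ _).trans (hsum ▸ hc i u (ω i))

end BoundedDifferences

theorem integral_le_sqrt_integral_sq {Ω : Type*} {mΩ : MeasurableSpace Ω} {μ : Measure Ω}
    [IsProbabilityMeasure μ] {f : Ω → ℝ} (hf : MemLp f 2 μ) :
    ∫ ω, f ω ∂μ ≤ √(∫ ω, f ω ^ 2 ∂μ) :=
  Real.le_sqrt_of_sq_le <| sub_nonneg.1 <|
    (variance_nonneg f μ).trans_eq (by simpa using variance_eq_sub hf)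

section Hilbert

open scoped InnerProductSpace

variable {E : Type*} [NormedAddCommGroup E] [InnerProductSpace ℝ E] [CompleteSpace E]

theorem integral_norm_sq_sum_of_pairwise_indepFun [MeasurableSpace E] [BorelSpace E]
    {Ω ι : Type*} {mΩ : MeasurableSpace Ω} {μ : Measure Ω} [IsFiniteMeasure μ]
    {s : Finset ι} {Z : ι → Ω → E}
    (hZ : ∀ i ∈ s, MemLp (Z i) 2 μ) (hmean : ∀ i ∈ s, ∫ ω, Z i ω ∂μ = 0)
    (hind : (s : Set ι).Pairwise fun i j ↦ IndepFun (Z i) (Z j) μ) :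
    ∫ ω, ‖∑ i ∈ s, Z i ω‖ ^ 2 ∂μ = ∑ i ∈ s, ∫ ω, ‖Z i ω‖ ^ 2 ∂μ := by
  have hint (i : ι) (hi : i ∈ s) (j : ι) (hj : j ∈ s) :
      Integrable (fun ω ↦ ⟪Z i ω, Z j ω⟫_ℝ) μ := by
    refine ((hZ i hi).norm.integrable_mul (hZ j hj).norm).mono'
      ((hZ i hi).1.inner (hZ j hj).1) (ae_of_all μ fun ω ↦ ?_)
    exact norm_inner_le_norm _ _
  have horth (i : ι) (hi : i ∈ s) (j : ι) (hj : j ∈ s) (hij : j ≠ i) :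
      ∫ ω, ⟪Z i ω, Z j ω⟫_ℝ ∂μ = 0 := by
    calc ∫ ω, ⟪Z i ω, Z j ω⟫_ℝ ∂μ = ⟪∫ ω, Z i ω ∂μ, ∫ ω, Z j ω ∂μ⟫_ℝ :=
          (hind hi hj hij.symm).integral_bilin ((hZ i hi).integrable one_le_two)
            ((hZ j hj).integrable one_le_two) (innerSL ℝ)
      _ = 0 := by rw [hmean i hi, inner_zero_left]
  calc ∫ ω, ‖∑ i ∈ s, Z i ω‖ ^ 2 ∂μ
      = ∫ ω, ∑ i ∈ s, ∑ j ∈ s, ⟪Z i ω, Z j ω⟫_ℝ ∂μ := by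
        simp_rw [← real_inner_self_eq_norm_sq, sum_inner, inner_sum]
    _ = ∑ i ∈ s, ∑ j ∈ s, ∫ ω, ⟪Z i ω, Z j ω⟫_ℝ ∂μ := by
        rw [integral_finsetSum _ fun i hi ↦ integrable_finsetSum _ (hint i hi)]
        exact Finset.sum_congr rfl fun i hi ↦ integral_finsetSum _ (hint i hi)
    _ = ∑ i ∈ s, ∫ ω, ‖Z i ω‖ ^ 2 ∂μ := by
        refine Finset.sum_congr rfl fun i hi ↦ ?_
        rw [Finset.sum_eq_single_of_mem i hi (horth i hi)]
        simp only [real_inner_self_eq_norm_sq]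

theorem integral_norm_sub_integral_sq_le {Ω : Type*} {mΩ : MeasurableSpace Ω} {μ : Measure Ω}
    [IsProbabilityMeasure μ] {X : Ω → E} (hX : MemLp X 2 μ) :
    ∫ ω, ‖X ω - ∫ ω', X ω' ∂μ‖ ^ 2 ∂μ ≤ ∫ ω, ‖X ω‖ ^ 2 ∂μ := by
  set e := ∫ ω, X ω ∂μ
  have hX1 : Integrable X μ := hX.integrable one_le_two
  have hXsq : Integrable (fun ω ↦ ‖X ω‖ ^ 2) μ := hX.integrable_norm_pow two_ne_zero
  have hXe : Integrable (fun ω ↦ 2 * ⟪e, X ω⟫_ℝ) μ := (hX1.const_inner e).const_mul 2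
  calc ∫ ω, ‖X ω - e‖ ^ 2 ∂μ = ∫ ω, (‖X ω‖ ^ 2 - 2 * ⟪e, X ω⟫_ℝ + ‖e‖ ^ 2) ∂μ := by
        simp only [norm_sub_sq_real, real_inner_comm e]
    _ = ∫ ω, ‖X ω‖ ^ 2 ∂μ - 2 * ⟪e, e⟫_ℝ + ‖e‖ ^ 2 := by
        rw [integral_add (f := fun ω ↦ ‖X ω‖ ^ 2 - 2 * ⟪e, X ω⟫_ℝ) (hXsq.sub hXe)
          (integrable_const _), integral_sub hXsq hXe, integral_const_mul, integral_inner hX1,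
          integral_const, probReal_univ, one_smul]
    _ = ∫ ω, ‖X ω‖ ^ 2 ∂μ - ‖e‖ ^ 2 := by rw [real_inner_self_eq_norm_sq]; ring
    _ ≤ ∫ ω, ‖X ω‖ ^ 2 ∂μ := sub_le_self _ (sq_nonneg _)

theorem integral_norm_sum_sub_integral_le {ι : Type*} [Fintype ι] {Ω : ι → Type*}
    {mΩ : ∀ j, MeasurableSpace (Ω j)} {μ : ∀ j, Measure (Ω j)} [∀ j, IsProbabilityMeasure (μ j)]
    {X : ∀ j, Ω j → E} (hX : ∀ j, MemLp (X j) 2 (μ j)) :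
    ∫ ω, ‖∑ j, (X j (ω j) - ∫ u, X j u ∂μ j)‖ ∂Measure.pi μ ≤
      √(∑ j, ∫ u, ‖X j u‖ ^ 2 ∂μ j) := by
  borelize E
  set Y : ∀ j, Ω j → E := fun j u ↦ X j u - ∫ u', X j u' ∂μ j with hY
  have hYL (j : ι) : MemLp (Y j) 2 (μ j) := (hX j).sub (memLp_const _)
  have hZL (j : ι) : MemLp (fun ω : ∀ j, Ω j ↦ Y j (ω j)) 2 (Measure.pi μ) :=
    (hYL j).comp_measurePreserving (measurePreserving_eval μ j)
  have hmean (j : ι) : ∫ ω, Y j (ω j) ∂Measure.pi μ = 0 := by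
    rw [integral_comp_eval (hYL j).1]
    simp [hY, integral_sub ((hX j).integrable one_le_two) (integrable_const _)]
  have hsq (j : ι) : ∫ ω, ‖Y j (ω j)‖ ^ 2 ∂Measure.pi μ = ∫ u, ‖Y j u‖ ^ 2 ∂μ j :=
    integral_comp_eval (f := fun u ↦ ‖Y j u‖ ^ 2) ((hYL j).1.norm.pow 2)
  have hind : iIndepFun (fun j (ω : ∀ j, Ω j) ↦ Y j (ω j)) (Measure.pi μ) :=
    iIndepFun_pi fun j ↦ (hYL j).1.aemeasurable
  calc ∫ ω, ‖∑ j, Y j (ω j)‖ ∂Measure.pi μ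
      ≤ √(∫ ω, ‖∑ j, Y j (ω j)‖ ^ 2 ∂Measure.pi μ) :=
        integral_le_sqrt_integral_sq (memLp_finsetSum _ fun j _ ↦ hZL j).norm
    _ = √(∑ j, ∫ u, ‖Y j u‖ ^ 2 ∂μ j) := by
        rw [integral_norm_sq_sum_of_pairwise_indepFun (fun j _ ↦ hZL j) (fun j _ ↦ hmean j)
          fun i _ j _ hij ↦ hind.indepFun hij]
        simp only [hsq]
    _ ≤ √(∑ j, ∫ u, ‖X j u‖ ^ 2 ∂μ j) :=
        Real.sqrt_le_sqrt <| Finset.sum_le_sum fun j _ ↦ integral_norm_sub_integral_sq_le (hX j)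

theorem integral_norm_sum_sub_integral_le_of_norm_le {ι : Type*} [Fintype ι] {Ω : ι → Type*}
    {mΩ : ∀ j, MeasurableSpace (Ω j)} {μ : ∀ j, Measure (Ω j)} [∀ j, IsProbabilityMeasure (μ j)]
    {X : ∀ j, Ω j → E} (hX : ∀ j, AEStronglyMeasurable (X j) (μ j)) {b : ι → ℝ}
    (hb : ∀ j u, ‖X j u‖ ≤ b j) :
    ∫ ω, ‖∑ j, (X j (ω j) - ∫ u, X j u ∂μ j)‖ ∂Measure.pi μ ≤ √(∑ j, b j ^ 2) := by
  have hXL (j : ι) : MemLp (X j) 2 (μ j) := .of_bound (hX j) (b j) (ae_of_all _ (hb j))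
  have hsq (j : ι) : ∫ u, ‖X j u‖ ^ 2 ∂μ j ≤ b j ^ 2 := by
    calc ∫ u, ‖X j u‖ ^ 2 ∂μ j ≤ ∫ _, b j ^ 2 ∂μ j :=
          integral_mono ((hXL j).integrable_norm_pow two_ne_zero) (integrable_const _)
            fun u ↦ pow_le_pow_left₀ (norm_nonneg _) (hb j u) 2
      _ = b j ^ 2 := by simp
  exact (integral_norm_sum_sub_integral_le hXL).trans <|
    Real.sqrt_le_sqrt <| Finset.sum_le_sum fun j _ ↦ hsq j

theorem measureReal_sqrt_add_le_norm_sum_sub_integral_le {m : ℕ} {Ω : Fin m → Type*}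
    {mΩ : ∀ j, MeasurableSpace (Ω j)} {μ : ∀ j, Measure (Ω j)} [∀ j, IsProbabilityMeasure (μ j)]
    {X : ∀ j, Ω j → E} (hX : ∀ j, StronglyMeasurable (X j)) {b : Fin m → ℝ≥0}
    (hb : ∀ j u, ‖X j u‖ ≤ b j) {t : ℝ} (ht : 0 ≤ t) :
    (Measure.pi μ).real {ω | √(∑ j, (b j : ℝ) ^ 2) + t ≤ ‖∑ j, (X j (ω j) - ∫ u, X j u ∂μ j)‖} ≤
      exp (-t ^ 2 / (2 * ∑ j, (b j : ℝ) ^ 2)) := by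
  set f : (∀ j, Ω j) → ℝ := fun ω ↦ ‖∑ j, (X j (ω j) - ∫ u, X j u ∂μ j)‖
  have hmean : ∫ ω, f ω ∂Measure.pi μ ≤ √(∑ j, (b j : ℝ) ^ 2) :=
    integral_norm_sum_sub_integral_le_of_norm_le (fun j ↦ (hX j).aestronglyMeasurable) hb
  have hosc (j : Fin m) (u v : Ω j) :
      ‖X j u - ∫ w, X j w ∂μ j - (X j v - ∫ w, X j w ∂μ j)‖ ≤ ↑(2 * b j) := by
    rw [sub_sub_sub_cancel_right, NNReal.coe_mul, NNReal.coe_ofNat, two_mul]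
    exact norm_sub_le_of_le (hb j u) (hb j v)
  have hsub : HasSubgaussianMGF (fun ω ↦ f ω - ∫ ω', f ω' ∂Measure.pi μ)
      (∑ j, (2 * b j / 2) ^ 2) (Measure.pi μ) :=
    hasSubgaussianMGF_norm_sum_sub_integral (fun j ↦ (hX j).sub stronglyMeasurable_const) hosc
  calc (Measure.pi μ).real {ω | √(∑ j, (b j : ℝ) ^ 2) + t ≤ f ω}
      ≤ (Measure.pi μ).real {ω | t ≤ f ω - ∫ ω', f ω' ∂Measure.pi μ} := by
        refine measureReal_mono fun ω hω ↦ ?_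
        rw [Set.mem_ofPred_eq] at hω ⊢
        linarith
    _ ≤ exp (-t ^ 2 / (2 * ∑ j, (b j : ℝ) ^ 2)) := by
        simpa using hsub.measure_ge_le ht

end Hilbert

section StdSimplex

variable {ι : Type*} [Fintype ι] {p : ι → ℝ}

theorem one_le_card_mul_sum_sq (hp : ∑ i, p i = 1) : 1 ≤ Fintype.card ι * ∑ i, p i ^ 2 := by
  simpa [hp] using sq_sum_le_card_mul_sum_sq (s := Finset.univ) (f := p)

theorem sum_sq_le_one_of_mem_stdSimplex (hp : p ∈ stdSimplex ℝ ι) : ∑ i, p i ^ 2 ≤ 1 := by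
  rw [← hp.2]
  gcongr with i
  exact pow_le_of_le_one (hp.1 i) ((mem_Icc_of_mem_stdSimplex hp i).2) two_ne_zero

theorem one_le_card_of_mem_stdSimplex (hp : p ∈ stdSimplex ℝ ι) : (1 : ℝ) ≤ Fintype.card ι :=
  (one_le_card_mul_sum_sq hp.2).trans <|
    mul_le_of_le_one_right (Nat.cast_nonneg _) (sum_sq_le_one_of_mem_stdSimplex hp)

end StdSimplex

section RelativeError

theorem abs_sq_sub_sq_le {a b r : ℝ} (hb : 0 ≤ b) (h : |a - b| ≤ r * b) :
    |a ^ 2 - b ^ 2| ≤ r * (2 + r) * b ^ 2 := by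
  have hadd : |a + b| ≤ (2 + r) * b := by
    calc |a + b| = |a - b + 2 * b| := by ring_nf
      _ ≤ |a - b| + |2 * b| := abs_add_le _ _
      _ ≤ (2 + r) * b := by rw [abs_of_nonneg (by positivity : 0 ≤ 2 * b)]; linarith
  calc |a ^ 2 - b ^ 2| = |a - b| * |a + b| := by rw [← abs_mul]; ring_nf
    _ ≤ r * b * ((2 + r) * b) := mul_le_mul h hadd (abs_nonneg _) ((abs_nonneg _).trans h)
    _ = r * (2 + r) * b ^ 2 := by ring

theorem abs_div_mul_one_div_sub_one_le {m n Q S r : ℝ} (hm : 1 < m) (hQ0 : 0 < Q) (hQ1 : Q ≤ 1)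
    (hnQ : 1 ≤ n * Q) (hS : |S - m ^ 2 * Q| ≤ r * (m ^ 2 * Q)) :
    |(S - m) / (m * (m - 1)) * (1 / Q) - 1| ≤ (r * m + (n - 1)) / (m - 1) := by
  have hm1 : 0 < m - 1 := sub_pos.2 hm
  have : 0 < m := one_pos.trans hm
  have hratio : (S - m) / (m * (m - 1)) * (1 / Q) - 1 =
      ((S - m ^ 2 * Q) / (m * Q) - (1 / Q - 1)) / (m - 1) := by
    field_simp
    ring
  have hmain : |(S - m ^ 2 * Q) / (m * Q)| ≤ r * m := by
    rw [abs_div, abs_of_pos (by positivity : 0 < m * Q), div_le_iff₀ (by positivity)]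
    linarith
  have hbias : |1 / Q - 1| ≤ n - 1 := by
    rw [abs_of_nonneg (sub_nonneg.2 (one_le_one_div hQ0 hQ1))]
    gcongr
    exact (div_le_iff₀ hQ0).2 hnQ
  rw [hratio, abs_div, abs_of_pos hm1]
  gcongr
  exact (abs_sub _ _).trans (add_le_add hmain hbias)

theorem sqrt_add_sqrt_le {m n s ε P : ℝ} (hm : 0 ≤ m) (hs : 1 ≤ s) (hε : 0 ≤ ε) (hP : 0 ≤ P)
    (hnP : 1 ≤ n * P ^ 2) (hmn : n * s ≤ m * ε ^ 2) :
    √m + √(2 * s * m) ≤ 5 / 2 * ε * (m * P) := by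
  have hsP : s ≤ m * (ε * P) ^ 2 := by
    calc s ≤ s * (n * P ^ 2) := le_mul_of_one_le_right (by linarith) hnP
      _ = n * s * P ^ 2 := by ring
      _ ≤ m * ε ^ 2 * P ^ 2 := by gcongr
      _ = m * (ε * P) ^ 2 := by ring
  have hsm : √(s * m) ≤ ε * (m * P) := by
    refine Real.sqrt_le_iff.2 ⟨by positivity, ?_⟩
    calc s * m ≤ m * (ε * P) ^ 2 * m := by gcongr
      _ = (ε * (m * P)) ^ 2 := by ring
  have htwo : √2 ≤ 3 / 2 := Real.sqrt_le_iff.2 (by norm_num)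
  calc √m + √(2 * s * m) ≤ √(s * m) + 3 / 2 * √(s * m) := by
        rw [mul_assoc, Real.sqrt_mul zero_le_two]
        gcongr
        exact le_mul_of_one_le_left hm hs
    _ ≤ 5 / 2 * ε * (m * P) := by linarith

theorem nine_le_of_mul_le_mul_sq {m n s ε : ℝ} (hε0 : 0 ≤ ε) (hε : ε ≤ 1 / 3) (hn : 1 ≤ n)
    (hs : 1 ≤ s) (hmn : n * s ≤ m * ε ^ 2) : 9 ≤ m := by
  have hmε : 1 ≤ m * ε ^ 2 := (one_le_mul_of_one_le_of_one_le hn hs).trans hmn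
  have hm0 : 0 < m := pos_of_mul_pos_left (one_pos.trans_le hmε) (sq_nonneg ε)
  have hεsq : ε ^ 2 ≤ 1 / 9 := by
    calc ε ^ 2 ≤ (1 / 3) ^ 2 := by gcongr
      _ = 1 / 9 := by norm_num
  linarith [mul_le_mul_of_nonneg_left hεsq hm0.le]

theorem relative_error_le {m n ε : ℝ} (hε0 : 0 ≤ ε) (hε : ε ≤ 1 / 3) (hm : 9 ≤ m)
    (hn : n ≤ m * ε ^ 2) :
    (5 / 2 * ε * (2 + 5 / 2 * ε) * m + (n - 1)) / (m - 1) ≤ 9 * ε := by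
  have : 0 ≤ m * ε := by positivity
  rw [div_le_iff₀ (by linarith)]
  calc 5 / 2 * ε * (2 + 5 / 2 * ε) * m + (n - 1) ≤ (5 + 29 / 4 * ε) * (m * ε) := by linarith
    _ ≤ 8 * (m * ε) := by gcongr; linarith
    _ ≤ 9 * ε * (m - 1) := by linarith [mul_le_mul_of_nonneg_right hm hε0]

theorem natCast_mul_rpow_eq_mul_sq {n : ℕ} {ε δ m : ℝ} (hn : n ≠ 0) (hε : 0 < ε)
    (hm : m = ε ^ (-2 : ℝ) * (n : ℝ) ^ (1 + δ)) : n * (n : ℝ) ^ δ = m * ε ^ 2 := by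
  have hn0 : (0 : ℝ) < n := by positivity
  rw [hm, Real.rpow_add hn0, Real.rpow_one, Real.rpow_neg hε.le, Real.rpow_two]
  field_simp

end RelativeError

section KeySequences

variable {U : Type*} [Fintype U] {n m : ℕ}

theorem exists_isProbabilityMeasure_real_singleton_eq [MeasurableSpace U]
    [MeasurableSingletonClass U] {q : U → ℝ} (hq0 : ∀ u, 0 ≤ q u) (hq1 : ∑ u, q u = 1) :
    ∃ μ : Measure U, IsProbabilityMeasure μ ∧ ∀ u, μ.real {u} = q u := by
  refine ⟨(PMF.ofFintype (fun u ↦ ENNReal.ofReal (q u)) ?_).toMeasure, inferInstance, fun u ↦ ?_⟩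
  · rw [← ENNReal.ofReal_sum_of_nonneg fun u _ ↦ hq0 u, hq1, ENNReal.ofReal_one]
  · rw [measureReal_def, PMF.toMeasure_apply_singleton _ _ (measurableSet_singleton u),
      PMF.ofFintype_apply, ENNReal.toReal_ofReal (hq0 u)]

theorem Pr_eq_measureReal_pi [MeasurableSpace U] [MeasurableSingletonClass U] (μ : Measure U)
    [IsProbabilityMeasure μ] (S : Set (Fin m → U)) :
    Pr (fun u ↦ μ.real {u}) S = (Measure.pi fun _ ↦ μ).real S := by
  classical
  have hsingleton (x : Fin m → U) : (Measure.pi fun _ ↦ μ).real {x} = ∏ j, μ.real {x j} := by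
    simp only [measureReal_def, Measure.pi_singleton, ENNReal.toReal_prod]
  calc Pr (fun u ↦ μ.real {u}) S = ∑ x with x ∈ S, (Measure.pi fun _ ↦ μ).real {x} := by
        simp only [Pr, Set.indicator_apply, Finset.sum_filter, hsingleton]
    _ = (Measure.pi fun _ ↦ μ).real S := by
        rw [sum_measureReal_singleton, Finset.coe_filter_univ, Set.ofPred_mem_eq]

theorem Pr_mono {q : U → ℝ} (hq0 : ∀ u, 0 ≤ q u) {S T : Set (Fin m → U)} (hST : S ⊆ T) :
    Pr q S ≤ Pr q T :=
  Finset.sum_le_sum fun x _ ↦ Set.indicator_le_indicator_of_subset hST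
    (fun y ↦ Finset.prod_nonneg fun j _ ↦ hq0 (y j)) x

theorem fiber_sum_mem_stdSimplex {q : U → ℝ} (hq0 : ∀ u, 0 ≤ q u) (hq1 : ∑ u, q u = 1)
    (h : U → Fin n) : (fun i ↦ ∑ u with h u = i, q u) ∈ stdSimplex ℝ (Fin n) :=
  ⟨fun _ ↦ Finset.sum_nonneg fun u _ ↦ hq0 u, by rw [Finset.sum_fiberwise, hq1]⟩

/-- The vector of slot counts `k(x) = (k₁(x), …, kₙ(x))`, regarded as a point of Euclidean
space. -/
noncomputable def occupancy (h : U → Fin n) (x : Fin m → U) : EuclideanSpace ℝ (Fin n) :=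
  WithLp.toLp 2 fun i ↦ (kcount h x i : ℝ)

theorem norm_occupancy_sq (h : U → Fin n) (x : Fin m → U) :
    ‖occupancy h x‖ ^ 2 = ∑ i, (kcount h x i : ℝ) ^ 2 := by
  simp [occupancy, EuclideanSpace.norm_sq_eq]

theorem sum_single_eq_occupancy (h : U → Fin n) (x : Fin m → U) :
    ∑ j, EuclideanSpace.single (h (x j)) (1 : ℝ) = occupancy h x := by
  ext i
  simp [occupancy, kcount, Finset.sum_apply, Pi.single_apply, eq_comm]

theorem sum_kcount (h : U → Fin n) (x : Fin m → U) : ∑ i, kcount h x i = m := by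
  simpa [kcount] using (Finset.card_eq_sum_card_fiberwise (f := h ∘ x) (s := Finset.univ)
    (t := Finset.univ) fun _ _ ↦ Finset.mem_coe.2 (Finset.mem_univ _)).symm

theorem collEst_eq (h : U → Fin n) (x : Fin m → U) :
    collEst h x = (‖occupancy h x‖ ^ 2 - m) / (m * (m - 1)) := by
  have hsum : ∑ i, (kcount h x i : ℝ) = m := mod_cast sum_kcount h x
  rw [norm_occupancy_sq, ← hsum, ← Finset.sum_sub_distrib, hsum, Finset.sum_div]
  exact Finset.sum_congr rfl fun i _ ↦ by rw [mul_sub_one, sq]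

theorem integral_single_eq [MeasurableSpace U] [MeasurableSingletonClass U] (μ : Measure U)
    [IsFiniteMeasure μ] (h : U → Fin n) :
    ∫ u, EuclideanSpace.single (h u) (1 : ℝ) ∂μ =
      WithLp.toLp 2 fun i ↦ ∑ u with h u = i, μ.real {u} := by
  rw [integral_fintype .of_finite]
  ext i
  simp [Finset.sum_filter, Pi.single_apply, eq_comm]

theorem one_sub_exp_neg_le_Pr_norm_occupancy_sub_le {q : U → ℝ} (hq0 : ∀ u, 0 ≤ q u)
    (hq1 : ∑ u, q u = 1) (h : U → Fin n) {p : Fin n → ℝ} (hp : ∀ i, p i = ∑ u with h u = i, q u)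
    (hm : m ≠ 0) {s : ℝ} (hs : 0 ≤ s) :
    1 - exp (-s) ≤
      Pr q {x : Fin m → U | ‖occupancy h x - (m : ℝ) • WithLp.toLp 2 p‖ ≤ √m + √(2 * s * m)} := by
  let _ : MeasurableSpace U := ⊤
  have : DiscreteMeasurableSpace U := ⟨fun _ ↦ trivial⟩
  obtain ⟨μ, hμ, hμq⟩ := exists_isProbabilityMeasure_real_singleton_eq hq0 hq1
  obtain rfl : (fun u ↦ μ.real {u}) = q := funext hμq
  have hmean : ∫ u, EuclideanSpace.single (h u) (1 : ℝ) ∂μ = WithLp.toLp 2 p := by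
    rw [integral_single_eq, funext hp]
  have htail := measureReal_sqrt_add_le_norm_sum_sub_integral_le (μ := fun _ : Fin m ↦ μ)
    (X := fun _ u ↦ EuclideanSpace.single (h u) (1 : ℝ)) (fun _ ↦ .of_discrete)
    (b := fun _ ↦ 1) (fun _ u ↦ by simp) (Real.sqrt_nonneg (2 * s * m))
  have hexp : -√(2 * s * m) ^ 2 / (2 * m) = -s := by
    rw [Real.sq_sqrt (by positivity)]
    field_simp
  simp only [Finset.sum_sub_distrib, sum_single_eq_occupancy, hmean, Finset.sum_const,
    Finset.card_univ, Fintype.card_fin, NNReal.coe_one, one_pow, ← Nat.cast_smul_eq_nsmul ℝ,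
    smul_eq_mul, mul_one, hexp] at htail
  rw [Pr_eq_measureReal_pi]
  refine (sub_le_sub_left htail 1).trans ?_
  rw [← probReal_compl_eq_one_sub .of_discrete]
  refine measureReal_mono fun x hx ↦ ?_
  simp only [Set.mem_compl_iff, Set.mem_ofPred_eq, not_le] at hx ⊢
  exact hx.le

theorem abs_collEst_mul_one_div_sub_one_le {h : U → Fin n} {x : Fin m → U} {p : Fin n → ℝ}
    (hp : p ∈ stdSimplex ℝ (Fin n)) {ε s : ℝ} (hε0 : 0 ≤ ε) (hε : ε ≤ 1 / 3) (hs : 1 ≤ s)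
    (hmn : n * s ≤ m * ε ^ 2)
    (hx : ‖occupancy h x - (m : ℝ) • WithLp.toLp 2 p‖ ≤ √m + √(2 * s * m)) :
    |collEst h x * (1 / ∑ i, p i ^ 2) - 1| ≤ 9 * ε := by
  have hP : ‖WithLp.toLp 2 p‖ ^ 2 = ∑ i, p i ^ 2 := by simp [EuclideanSpace.norm_sq_eq]
  have hQ1 : ∑ i, p i ^ 2 ≤ 1 := sum_sq_le_one_of_mem_stdSimplex hp
  have hnQ : 1 ≤ n * ∑ i, p i ^ 2 := by simpa using one_le_card_mul_sum_sq hp.2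
  have hQ0 : 0 < ∑ i, p i ^ 2 := pos_of_mul_pos_right (one_pos.trans_le hnQ) n.cast_nonneg
  have hn : (1 : ℝ) ≤ n := by simpa using one_le_card_of_mem_stdSimplex hp
  have hm : (9 : ℝ) ≤ m := nine_le_of_mul_le_mul_sq hε0 hε hn hs hmn
  have hnorm : |‖occupancy h x‖ - m * ‖WithLp.toLp 2 p‖| ≤
      5 / 2 * ε * (m * ‖WithLp.toLp 2 p‖) := by
    calc |‖occupancy h x‖ - m * ‖WithLp.toLp 2 p‖|
        = |‖occupancy h x‖ - ‖(m : ℝ) • WithLp.toLp 2 p‖| := by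
          rw [norm_smul, Real.norm_natCast]
      _ ≤ √m + √(2 * s * m) := (abs_norm_sub_norm_le _ _).trans hx
      _ ≤ 5 / 2 * ε * (m * ‖WithLp.toLp 2 p‖) :=
          sqrt_add_sqrt_le m.cast_nonneg hs hε0 (norm_nonneg _) (hP ▸ hnQ) hmn
  have hsq := abs_sq_sub_sq_le (by positivity) hnorm
  rw [mul_pow, hP] at hsq
  rw [collEst_eq]
  exact (abs_div_mul_one_div_sub_one_le (by linarith) hQ0 hQ1 hnQ hsq).trans <|
    relative_error_le hε0 hε hm ((le_mul_of_one_le_right n.cast_nonneg hs).trans hmn)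

theorem collision_estimator_cor1_general {q : U → ℝ} (hq0 : ∀ u, 0 ≤ q u)
    (hq1 : ∑ u, q u = 1) (h : U → Fin n) {p : Fin n → ℝ}
    (hp : ∀ i, p i = ∑ u with h u = i, q u) {ε s : ℝ} (hε0 : 0 ≤ ε) (hε : ε ≤ 1 / 3)
    (hs : 1 ≤ s) (hmn : n * s ≤ m * ε ^ 2) :
    1 - exp (-s) ≤ Pr q {x : Fin m → U | |collEst h x * (1 / ∑ i, p i ^ 2) - 1| ≤ 9 * ε} := by
  have hpS : p ∈ stdSimplex ℝ (Fin n) := funext hp ▸ fiber_sum_mem_stdSimplex hq0 hq1 h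
  have hn : (1 : ℝ) ≤ n := by simpa using one_le_card_of_mem_stdSimplex hpS
  have hm : (0 : ℝ) < m := by linarith [nine_le_of_mul_le_mul_sq hε0 hε hn hs hmn]
  calc 1 - exp (-s)
      ≤ Pr q {x : Fin m → U |
          ‖occupancy h x - (m : ℝ) • WithLp.toLp 2 p‖ ≤ √m + √(2 * s * m)} :=
        one_sub_exp_neg_le_Pr_norm_occupancy_sub_le hq0 hq1 h hp (mod_cast hm.ne')
          (zero_le_one.trans hs)
    _ ≤ Pr q {x : Fin m → U | |collEst h x * (1 / ∑ i, p i ^ 2) - 1| ≤ 9 * ε} :=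
        Pr_mono hq0 fun x hx ↦ abs_collEst_mul_one_div_sub_one_le hpS hε0 hε hs hmn hx

end KeySequences

/-- Corollary 5 of the paper: For all `n > 24`, `0 < ε < 1/3`, `δ > 0`,
if `m = ε⁻² n^(1+δ)`, then with probability at least `1 − (10/9) e^(−n^δ)` the
empirical collision probability estimates `‖p‖²` within relative error `22 ε`. -/
theorem collision_estimator_cor1
    {U : Type*} [Fintype U] [Nonempty U]
    (n : ℕ) (hn : 24 < n)
    (q : U → ℝ) (hq0 : ∀ u, 0 ≤ q u) (hq1 : ∑ u, q u = 1)
    (h : U → Fin n)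
    (p : Fin n → ℝ)
    (hp : ∀ i, p i = ∑ u ∈ Finset.univ.filter (fun u => h u = i), q u)
    (m : ℕ) (hm : 2 ≤ m)
    (ε δ : ℝ) (hε0 : 0 < ε) (hε : ε < 1 / 3) (hδ : 0 < δ)
    (hmn : (m : ℝ) = ε ^ (-2 : ℝ) * (n : ℝ) ^ (1 + δ)) :
    1 - (10 / 9) * Real.exp (-(n : ℝ) ^ δ)
      ≤ Pr q {x : Fin m → U |
          |collEst h x * (1 / ∑ i : Fin n, p i ^ 2) - 1| ≤ 22 * ε} := by
  have hmε : n * (n : ℝ) ^ δ = m * ε ^ 2 := natCast_mul_rpow_eq_mul_sq (by lia) hε0 hmn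
  have hs : 1 ≤ (n : ℝ) ^ δ := Real.one_le_rpow (mod_cast (by lia : 1 ≤ n)) hδ.le
  have hle : 9 * ε ≤ 22 * ε := by gcongr; norm_num
  calc 1 - (10 / 9) * Real.exp (-(n : ℝ) ^ δ)
      ≤ 1 - Real.exp (-(n : ℝ) ^ δ) := by linarith [Real.exp_pos (-(n : ℝ) ^ δ)]
    _ ≤ Pr q {x : Fin m → U | |collEst h x * (1 / ∑ i, p i ^ 2) - 1| ≤ 9 * ε} :=
        collision_estimator_cor1_general hq0 hq1 h hp hε0.le hε.le hs hmε.le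
    _ ≤ Pr q {x : Fin m → U | |collEst h x * (1 / ∑ i, p i ^ 2) - 1| ≤ 22 * ε} :=
        Pr_mono hq0 fun x (hx : _ ≤ 9 * ε) ↦ hx.trans hle
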